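/- Let P be the convex hull in ℝ³ of the five points (1,0,0), (0,1,0), (0,0,1), (−1,−1,−1), (−1,−1,2). Then 0 lies in the interior of P, and the dual polytope P* = {x ∈ ℝ³ : ⟨x, y⟩ ≥ −1 for all y ∈ P} satisfies P* = convexHull(P* ∩ ℤ³); that is, P is a reflexive polytope. -/

import Mathlib

open Matrix

/-!
The vertices `(1,0,0)`, `(0,1,0)`, `(0,0,1)`, `(-1,-1,-1)` of `P` span `ℝ³` and have barycentre `0`,
so `0` is interior to `P`.

A linear inequality holds on `P` as soon as it holds at the generators, so `P*` is the set of
`(a, b, c)` with `a, b, c ≥ -1`, `a + b + c ≤ 1` and `a + b - 2c ≤ 1`. At height `c` this is a right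
triangle with corner `(-1,-1,c)` and legs of length `min (3 - c) (3 + 2c)`. The plane `c = 0` cuts
`P*` into a corner tetrahedron (`c ≥ 0`) and a frustum (`c ≤ 0`), and all vertices of the two pieces
lie in the convex hull of six lattice points of `P*`.
-/

lemma convexHull_convexHull_inter_of_subset {R E : Type*} [Semiring R] [PartialOrder R]
    [AddCommMonoid E] [Module R E] {s t : Set E} (h : s ⊆ t) :
    convexHull R (convexHull R s ∩ t) = convexHull R s :=
  (convexHull_min Set.inter_subset_left (convex_convexHull R s)).antisymm
    (convexHull_mono (Set.subset_inter (subset_convexHull R s) h))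

lemma add_sum_smul_mem_of_convex {R E ι : Type*} [Field R] [LinearOrder R]
    [IsStrictOrderedRing R] [AddCommGroup E] [Module R E] {s : Set E} {T : Finset ι} {p : E}
    {v : ι → E} {a : ι → R} {r : R}
    (hs : Convex R s) (hp : p ∈ s) (hr : 0 < r) (hv : ∀ i ∈ T, p + r • v i ∈ s)
    (ha : ∀ i ∈ T, 0 ≤ a i) (hsum : ∑ i ∈ T, a i ≤ r) : p + ∑ i ∈ T, a i • v i ∈ s := by
  -- Give the corner `p`, indexed by `none`, the weight missing from `∑ a i / r`.
  let w : Option ι → R := fun o ↦ o.elim (1 - ∑ i ∈ T, a i / r) fun i ↦ a i / r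
  let z : Option ι → E := fun o ↦ o.elim p fun i ↦ p + r • v i
  have hw_le : ∑ i ∈ T, a i / r ≤ 1 := by
    rw [← Finset.sum_div]
    exact div_le_one_of_le₀ hsum hr.le
  have hw_nonneg : ∀ o ∈ T.insertNone, 0 ≤ w o :=
    Finset.forall_mem_insertNone.2
      ⟨sub_nonneg.2 hw_le, fun i hi ↦ div_nonneg (ha i hi) hr.le⟩
  have hw_sum : ∑ o ∈ T.insertNone, w o = 1 := by
    simp [w, Finset.sum_insertNone]
  have hz : ∀ o ∈ T.insertNone, z o ∈ s := Finset.forall_mem_insertNone.2 ⟨hp, hv⟩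
  have hsmul (i : ι) : (a i / r) • (p + r • v i) = (a i / r) • p + a i • v i := by
    rw [smul_add, smul_smul, div_mul_cancel₀ _ hr.ne']
  have hcomb : ∑ o ∈ T.insertNone, w o • z o = p + ∑ i ∈ T, a i • v i := by
    simp only [Finset.sum_insertNone, w, z, Option.elim_none, Option.elim_some, hsmul,
      Finset.sum_add_distrib, ← Finset.sum_smul, sub_smul, one_smul]
    abel
  exact hcomb ▸ hs.sum_mem hw_nonneg hw_sum hz

lemma zero_mem_interior_convexHull_range {ι E : Type*} [Fintype ι] [AddCommGroup E] [Module ℝ E]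
    [TopologicalSpace E] [IsTopologicalAddGroup E] [ContinuousSMul ℝ E] [T2Space E] {v : ι → E}
    {w : ι → ℝ}
    (hspan : Submodule.span ℝ (Set.range v) = ⊤) (hw_pos : ∀ i, 0 < w i) (hw_sum : ∑ i, w i = 1)
    (hzero : ∑ i, w i • v i = 0) : 0 ∈ interior (convexHull ℝ (Set.range v)) := by
  have hconv : Convex ℝ (convexHull ℝ (Set.range v)) := convex_convexHull ℝ _
  have hv (i : ι) : v i ∈ convexHull ℝ (Set.range v) := subset_convexHull ℝ _ ⟨i, rfl⟩
  have h0 : 0 ∈ convexHull ℝ (Set.range v) :=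
    hzero ▸ hconv.sum_mem (fun i _ ↦ (hw_pos i).le) hw_sum fun i _ ↦ hv i
  let f : (ι → ℝ) →ₗ[ℝ] E := Fintype.linearCombination ℝ v
  have hf_surj : Function.Surjective f :=
    LinearMap.range_eq_top.1 <| (Fintype.range_linearCombination ℝ v).trans hspan
  have : FiniteDimensional ℝ E := .of_surjective f hf_surj
  have hf : IsOpenMap f := f.isOpenMap_of_finiteDimensional hf_surj
  -- Halving the weights leaves room to perturb them while their sum stays below `1`.
  let U : Set (ι → ℝ) := {u | (∀ i, 0 < u i) ∧ ∑ i, u i < 1}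
  have hU : IsOpen U := by
    refine .and ?_ (isOpen_lt (by fun_prop) continuous_const)
    simpa only [Set.ofPred_forall] using
      isOpen_iInter_of_finite fun i ↦ isOpen_lt continuous_const (continuous_apply i)
  refine mem_interior.2 ⟨f '' U, ?_, hf U hU, (2⁻¹ : ℝ) • w, ⟨fun i ↦ ?_, ?_⟩, ?_⟩
  · rintro _ ⟨u, ⟨hu_pos, hu_sum⟩, rfl⟩
    simpa [f, Fintype.linearCombination_apply] using
      add_sum_smul_mem_of_convex hconv h0 one_pos (fun i _ ↦ by simpa using hv i)
        (fun i _ ↦ (hu_pos i).le) hu_sum.le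
  · exact mul_pos (by norm_num) (hw_pos i)
  · simp only [Pi.smul_apply, smul_eq_mul, ← Finset.mul_sum, hw_sum]
    norm_num
  · rw [map_smul, Fintype.linearCombination_apply, hzero, smul_zero]

section DualPolytope

variable {R n : Type*} [Fintype n] [CommRing R] [PartialOrder R]

/-- The dual `P*` of a set `P` of vectors, with the sign convention `⟨x, y⟩ ≥ -1` of toric geometry
(rather than the `⟨x, y⟩ ≤ 1` of the polar set). -/
def dualPolytope (P : Set (n → R)) : Set (n → R) := {x | ∀ y ∈ P, x ⬝ᵥ y ≥ -1}

variable [IsOrderedRing R]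

lemma convex_dualPolytope (P : Set (n → R)) : Convex R (dualPolytope P) := by
  have hinter : dualPolytope P = ⋂ y ∈ P, {x | -1 ≤ x ⬝ᵥ y} := by
    ext x
    simp [dualPolytope]
  exact hinter ▸ convex_iInter₂ fun y _ ↦
    convex_halfSpace_ge ⟨fun u v ↦ add_dotProduct u v y, fun c u ↦ smul_dotProduct c u y⟩ _

lemma dualPolytope_convexHull (s : Set (n → R)) :
    dualPolytope (convexHull R s) = dualPolytope s := by
  ext x
  have hx : Convex R {y | -1 ≤ x ⬝ᵥ y} :=
    convex_halfSpace_ge ⟨dotProduct_add x, fun c y ↦ dotProduct_smul c x y⟩ _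
  exact hx.convexHull_subset_iff

end DualPolytope

/-- The generators of the polytope `P`. -/
def polytope34Vertices : Set (Fin 3 → ℝ) :=
  {![1, 0, 0], ![0, 1, 0], ![0, 0, 1], ![-1, -1, -1], ![-1, -1, 2]}

/-- The generators of the dual polytope `P*`, by third coordinate `c`: the three corners of the
facet `c = -1`, two of the three corners of the section `c = 0`, and the apex. -/
def polytope34DualVertices : Set (Fin 3 → ℝ) :=
  {![-1, -1, -1], ![0, -1, -1], ![-1, 0, -1], ![2, -1, 0], ![-1, 2, 0], ![-1, -1, 3]}

lemma zero_mem_interior_convexHull_polytope34Vertices :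
    0 ∈ interior (convexHull ℝ polytope34Vertices) := by
  let v : Fin 4 → Fin 3 → ℝ := ![![1, 0, 0], ![0, 1, 0], ![0, 0, 1], ![-1, -1, -1]]
  have hv : Set.range v ⊆ polytope34Vertices := by
    rintro _ ⟨i, rfl⟩
    fin_cases i <;> simp [v, polytope34Vertices]
  have hspan : Submodule.span ℝ (Set.range v) = ⊤ := by
    rw [eq_top_iff, ← (Pi.basisFun ℝ (Fin 3)).span_eq]
    refine Submodule.span_mono ?_
    rintro _ ⟨i, rfl⟩
    refine ⟨i.castSucc, ?_⟩
    ext j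
    fin_cases i <;> fin_cases j <;> simp [v]
  have hzero : ∑ i, (4⁻¹ : ℝ) • v i = 0 := by
    ext j
    fin_cases j <;> simp [v, Fin.sum_univ_four]
  exact interior_mono (convexHull_mono hv) <|
    zero_mem_interior_convexHull_range hspan (fun _ ↦ by norm_num) (by norm_num) hzero

lemma mem_dualPolytope_polytope34Vertices {x : Fin 3 → ℝ} :
    x ∈ dualPolytope polytope34Vertices ↔
      -1 ≤ x 0 ∧ -1 ≤ x 1 ∧ -1 ≤ x 2 ∧ x 0 + x 1 + x 2 ≤ 1 ∧ x 0 + x 1 - 2 * x 2 ≤ 1 := by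
  simp only [dualPolytope, polytope34Vertices, Set.mem_ofPred_eq, Set.forall_mem_insert,
    Set.mem_singleton_iff, forall_eq, dotProduct, Fin.sum_univ_three, Matrix.cons_val]
  constructor <;> rintro ⟨h1, h2, h3, h4, h5⟩ <;> refine ⟨?_, ?_, ?_, ?_, ?_⟩ <;> linarith

lemma polytope34DualVertices_subset_dualPolytope :
    polytope34DualVertices ⊆ dualPolytope polytope34Vertices := by
  rintro x (rfl | rfl | rfl | rfl | rfl | rfl) <;>
    simp only [mem_dualPolytope_polytope34Vertices, Matrix.cons_val] <;> norm_num

lemma polytope34DualVertices_subset_lattice :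
    polytope34DualVertices ⊆ {x | ∀ i, ∃ m : ℤ, x i = m} := by
  have hlattice (a b c : ℤ) : ![(a : ℝ), b, c] ∈ {x : Fin 3 → ℝ | ∀ i, ∃ m : ℤ, x i = m} :=
    fun i ↦ ⟨![a, b, c] i, by fin_cases i <;> rfl⟩
  rintro x (rfl | rfl | rfl | rfl | rfl | rfl)
  · simpa using hlattice (-1) (-1) (-1)
  · simpa using hlattice 0 (-1) (-1)
  · simpa using hlattice (-1) 0 (-1)
  · simpa using hlattice 2 (-1) 0
  · simpa using hlattice (-1) 2 0
  · simpa using hlattice (-1) (-1) 3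

lemma corner_mem_convexHull_polytope34DualVertices :
    ![-1, -1, 0] ∈ convexHull ℝ polytope34DualVertices := by
  have hbottom : ![-1, -1, -1] ∈ convexHull ℝ polytope34DualVertices :=
    subset_convexHull ℝ _ (by simp [polytope34DualVertices])
  have hapex : ![-1, -1, 3] ∈ convexHull ℝ polytope34DualVertices :=
    subset_convexHull ℝ _ (by simp [polytope34DualVertices])
  convert convex_convexHull ℝ polytope34DualVertices hbottom hapex
    (a := 3 / 4) (b := 1 / 4) (by norm_num) (by norm_num) (by norm_num) using 1
  ext i
  fin_cases i <;> norm_num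

lemma mem_convexHull_polytope34DualVertices_of_nonneg {x : Fin 3 → ℝ} (h0 : -1 ≤ x 0)
    (h1 : -1 ≤ x 1) (h2 : 0 ≤ x 2) (hsum : x 0 + x 1 + x 2 ≤ 1) :
    x ∈ convexHull ℝ polytope34DualVertices := by
  let p : Fin 3 → ℝ := ![-1, -1, 0]
  have hlegs : ∀ i ∈ Finset.univ,
      p + (3 : ℝ) • Pi.single i 1 ∈ convexHull ℝ polytope34DualVertices := by
    intro i _
    have hleg : p + (3 : ℝ) • Pi.single i 1 = ![![2, -1, 0], ![-1, 2, 0], ![-1, -1, 3]] i := by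
      ext j
      fin_cases i <;> fin_cases j <;> norm_num [p]
    rw [hleg]
    refine subset_convexHull ℝ _ ?_
    fin_cases i <;> simp [polytope34DualVertices]
  have hcoord_nonneg : ∀ i ∈ Finset.univ, 0 ≤ (x - p) i := by
    intro i _
    fin_cases i <;> simp [p] <;> linarith
  have hcoord_sum : ∑ i, (x - p) i ≤ 3 := by
    simp only [Fin.sum_univ_three, Pi.sub_apply, p, Matrix.cons_val]
    linarith
  have hx : p + ∑ i, (x - p) i • Pi.single i 1 = x := by
    rw [← pi_eq_sum_univ' (x - p), add_sub_cancel]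
  exact hx ▸ add_sum_smul_mem_of_convex (convex_convexHull ℝ _)
    corner_mem_convexHull_polytope34DualVertices three_pos hlegs hcoord_nonneg hcoord_sum

lemma slice_vertices_mem_convexHull_polytope34DualVertices {c : ℝ} (hc : -1 ≤ c) (hc' : c ≤ 0) :
    ![-1, -1, c] ∈ convexHull ℝ polytope34DualVertices ∧
      ![2 + 2 * c, -1, c] ∈ convexHull ℝ polytope34DualVertices ∧
      ![-1, 2 + 2 * c, c] ∈ convexHull ℝ polytope34DualVertices := by
  set S := convexHull ℝ polytope34DualVertices
  have hvertex {y : Fin 3 → ℝ} (hy : y ∈ polytope34DualVertices) : y ∈ S :=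
    subset_convexHull ℝ _ hy
  have hinterpolate {a b a' b' u v : ℝ} (hbot : ![a, b, -1] ∈ S) (htop : ![a', b', 0] ∈ S)
      (hu : u = -c * a + (1 + c) * a') (hv : v = -c * b + (1 + c) * b') : ![u, v, c] ∈ S := by
    convert convex_convexHull ℝ _ hbot htop (a := -c) (b := 1 + c) (by linarith) (by linarith)
      (by ring) using 1
    ext i
    fin_cases i <;> simp [hu, hv]
  refine ⟨?_, ?_, ?_⟩
  · exact hinterpolate (hvertex (by simp [polytope34DualVertices]) : ![-1, -1, -1] ∈ S)
      corner_mem_convexHull_polytope34DualVertices (by ring) (by ring)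
  · exact hinterpolate (hvertex (by simp [polytope34DualVertices]) : ![0, -1, -1] ∈ S)
      (hvertex (by simp [polytope34DualVertices]) : ![2, -1, 0] ∈ S) (by ring) (by ring)
  · exact hinterpolate (hvertex (by simp [polytope34DualVertices]) : ![-1, 0, -1] ∈ S)
      (hvertex (by simp [polytope34DualVertices]) : ![-1, 2, 0] ∈ S) (by ring) (by ring)

lemma mem_convexHull_polytope34DualVertices_of_nonpos {x : Fin 3 → ℝ} (h0 : -1 ≤ x 0)
    (h1 : -1 ≤ x 1) (h2 : -1 ≤ x 2) (h2' : x 2 ≤ 0) (hsum : x 0 + x 1 - 2 * x 2 ≤ 1) :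
    x ∈ convexHull ℝ polytope34DualVertices := by
  obtain ⟨hcorner, hleg₀, hleg₁⟩ := slice_vertices_mem_convexHull_polytope34DualVertices h2 h2'
  let p : Fin 3 → ℝ := ![-1, -1, x 2]
  let e : Fin 2 → Fin 3 → ℝ := ![![1, 0, 0], ![0, 1, 0]]
  let a : Fin 2 → ℝ := ![x 0 + 1, x 1 + 1]
  have hlegs : ∀ i ∈ Finset.univ,
      p + (3 + 2 * x 2) • e i ∈ convexHull ℝ polytope34DualVertices := by
    intro i _
    have hleg : p + (3 + 2 * x 2) • e i =
        ![![2 + 2 * x 2, -1, x 2], ![-1, 2 + 2 * x 2, x 2]] i := by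
      ext j
      fin_cases i <;> fin_cases j <;> simp [p, e] <;> ring
    rw [hleg]
    fin_cases i
    exacts [hleg₀, hleg₁]
  have hcoord_nonneg : ∀ i ∈ Finset.univ, 0 ≤ a i := by
    intro i _
    fin_cases i <;> simp [a] <;> linarith
  have hcoord_sum : ∑ i, a i ≤ 3 + 2 * x 2 := by
    simp only [Fin.sum_univ_two, a, Matrix.cons_val]
    linarith
  have hx : p + ∑ i, a i • e i = x := by
    ext j
    fin_cases j <;> simp [p, e, a]
  exact hx ▸ add_sum_smul_mem_of_convex (convex_convexHull ℝ _) hcorner (by linarith) hlegs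
    hcoord_nonneg hcoord_sum

lemma dualPolytope_polytope34Vertices :
    dualPolytope polytope34Vertices = convexHull ℝ polytope34DualVertices := by
  refine Set.Subset.antisymm (fun x hx ↦ ?_) <|
    convexHull_min polytope34DualVertices_subset_dualPolytope (convex_dualPolytope _)
  obtain ⟨h0, h1, h2, hupper, hlower⟩ := mem_dualPolytope_polytope34Vertices.1 hx
  rcases le_total 0 (x 2) with hnonneg | hnonpos
  · exact mem_convexHull_polytope34DualVertices_of_nonneg h0 h1 hnonneg hupper
  · exact mem_convexHull_polytope34DualVertices_of_nonpos h0 h1 h2 hnonpos hlower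

/-- The polytope with vertices `(1,0,0)`, `(0,1,0)`, `(0,0,1)`, `(−1,−1,−1)`,
`(−1,−1,2)` contains the origin in its interior and is reflexive: its dual equals the
convex hull of the dual's lattice points. -/
theorem polytope34_reflexive
    (P : Set (Fin 3 → ℝ))
    (hP : P = convexHull ℝ
      ({![1, 0, 0], ![0, 1, 0], ![0, 0, 1], ![-1, -1, -1], ![-1, -1, 2]} :
        Set (Fin 3 → ℝ)))
    (Pd : Set (Fin 3 → ℝ))
    (hPd : Pd = {x : Fin 3 → ℝ | ∀ y ∈ P, x ⬝ᵥ y ≥ -1}) :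
    0 ∈ interior P ∧
      Pd = convexHull ℝ (Pd ∩ {x : Fin 3 → ℝ | ∀ i, ∃ m : ℤ, x i = (m : ℝ)}) := by
  change P = convexHull ℝ polytope34Vertices at hP
  change Pd = dualPolytope P at hPd
  have hdual : Pd = convexHull ℝ polytope34DualVertices := by
    rw [hPd, hP, dualPolytope_convexHull, dualPolytope_polytope34Vertices]
  refine ⟨hP ▸ zero_mem_interior_convexHull_polytope34Vertices, ?_⟩
  rw [hdual, convexHull_convexHull_inter_of_subset polytope34DualVertices_subset_lattice]
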